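/- arXiv:2005.06207 — 2 statements merged into one kernel-verified Lean document; each statement's English description precedes it below -/
import Mathlib

section
/- Suppose the standing assumptions on f, g, h, Ω, F hold together with Assumptions 1, 2, 3 and 4, and let (x^k), (y^k), (c_k), (α_k) be generated by PGSA. Then there exists b > 0 such that for every k ∈ ℕ there exists ω^{k+1} ∈ ∂̂F(x^{k+1}) with ‖ω^{k+1}‖₂ ≤ b·‖x^{k+1} − x^k‖₂. -/
open Filter Topology
open scoped RealInnerProductSpace

noncomputable section

/-- The Fréchet subdifferential of an extended-real-valued function `φ` at `x`:
the set of `y` with `liminf_{z→x, z≠x} (φ z − φ x − ⟨y, z−x⟩)/‖z−x‖ ≥ 0`,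
empty when `φ x = +∞`. -/
def fsub {n : ℕ} (φ : EuclideanSpace ℝ (Fin n) → EReal) (x : EuclideanSpace ℝ (Fin n)) :
    Set (EuclideanSpace ℝ (Fin n)) :=
  {y | φ x ≠ ⊤ ∧
    0 ≤ liminf (fun z => (φ z - φ x - ((⟪y, z - x⟫ : ℝ) : EReal)) / ((‖z - x‖ : ℝ) : EReal))
      (𝓝[≠] x)}

/-- The limiting (Mordukhovich) subdifferential. -/
def lsub {n : ℕ} (φ : EuclideanSpace ℝ (Fin n) → EReal) (x : EuclideanSpace ℝ (Fin n)) :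
    Set (EuclideanSpace ℝ (Fin n)) :=
  {y | ∃ u : ℕ → EuclideanSpace ℝ (Fin n), ∃ v : ℕ → EuclideanSpace ℝ (Fin n),
      Tendsto u atTop (𝓝 x) ∧ Tendsto (fun k => φ (u k)) atTop (𝓝 (φ x)) ∧
      (∀ k, v k ∈ fsub φ (u k)) ∧ Tendsto v atTop (𝓝 y)}

/-- The subdifferential of a convex real-valued function. -/
def csub {n : ℕ} (g : EuclideanSpace ℝ (Fin n) → ℝ) (x : EuclideanSpace ℝ (Fin n)) :
    Set (EuclideanSpace ℝ (Fin n)) :=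
  {y | ∀ z, g x + ⟪y, z - x⟫ ≤ g z}

/-- The (possibly set-valued) proximity operator of a proper lsc extended-real-valued
function `ψ` at `u`. -/
def proxSet {n : ℕ} (ψ : EuclideanSpace ℝ (Fin n) → EReal) (u : EuclideanSpace ℝ (Fin n)) :
    Set (EuclideanSpace ℝ (Fin n)) :=
  {y | ∀ z, ψ y + ((‖y - u‖ ^ 2 / 2 : ℝ) : EReal) ≤ ψ z + ((‖z - u‖ ^ 2 / 2 : ℝ) : EReal)}

/-- The fractional objective `F = (f+h)/g` on `Ω ∩ dom f`, `+∞` elsewhere. -/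
def Ffrac {n : ℕ} (f : EuclideanSpace ℝ (Fin n) → EReal) (g h : EuclideanSpace ℝ (Fin n) → ℝ) :
    EuclideanSpace ℝ (Fin n) → EReal :=
  fun x => if g x ≠ 0 ∧ f x ≠ ⊤ then ((((f x).toReal + h x) / g x : ℝ) : EReal) else ⊤

/-!
A PGSA step is a proximal gradient step for `f + (h - c k * g)`, so its optimality condition gives
a Fréchet subgradient of `f` at `x (k + 1)`. Adding the gradient of `h - c (k + 1) * g` and
dividing by `g (x (k + 1))` gives a subgradient of `F`; up to that factor it is a multiple of the
step plus the change of `∇h - c k • ∇g` along the step. The iterates stay in a compact sublevel set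
of `F`, on which `g ≠ 0`, so `∇h` and `∇g` change by `O(‖x (k + 1) - x k‖)`.

The ratios `c k` decrease, and bounding their decrease takes a lower bound on
`f (x (k + 1)) - f (x k)`: since `x k` solves the previous proximal problem, `f` lies above
a concave quadratic touching it at `x k` with bounded slope. There is no previous problem for
`k = 0`, but a single index only matters if its step vanishes, and then so does the subgradient.
-/

open Asymptotics

section Hilbert

variable {E : Type*} [NormedAddCommGroup E] [InnerProductSpace ℝ E]

lemma le_add_inner_add_sq_of_lipschitzWith_gradient [CompleteSpace E] {h : E → ℝ} {h' : E → E}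
    {L : NNReal} (hgrad : ∀ z, HasGradientAt h (h' z) z) (hlip : LipschitzWith L h') (a b : E) :
    h b ≤ h a + ⟪h' a, b - a⟫ + L / 2 * ‖b - a‖ ^ 2 := by
  set d := b - a with hd
  have hasDerivAt_line (t : ℝ) :
      HasDerivAt (fun t : ℝ => h (a + t • d)) ⟪h' (a + t • d), d⟫ t := by
    have hline : HasDerivAt (fun t : ℝ => a + t • d) d t := by
      simpa using ((hasDerivAt_id t).smul_const d).const_add a
    exact (hgrad (a + t • d)).hasFDerivAt.comp_hasDerivAt t hline
  have hasDerivAt_parabola (t : ℝ) :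
      HasDerivAt (fun t : ℝ => h a + t * ⟪h' a, d⟫ + L / 2 * ‖d‖ ^ 2 * t ^ 2)
        (⟪h' a, d⟫ + L * ‖d‖ ^ 2 * t) t := by
    refine ((((hasDerivAt_id t).mul_const ⟪h' a, d⟫).const_add (h a)).add
      ((hasDerivAt_pow 2 t).const_mul (L / 2 * ‖d‖ ^ 2))).congr_deriv ?_
    norm_num
    ring
  have deriv_le (t : ℝ) (ht : 0 ≤ t) :
      ⟪h' (a + t • d), d⟫ ≤ ⟪h' a, d⟫ + L * ‖d‖ ^ 2 * t := by
    have hle : ‖h' (a + t • d) - h' a‖ ≤ L * (t * ‖d‖) := by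
      simpa [norm_smul, abs_of_nonneg ht] using hlip.norm_sub_le (a + t • d) a
    calc ⟪h' (a + t • d), d⟫ = ⟪h' a, d⟫ + ⟪h' (a + t • d) - h' a, d⟫ := by
          rw [inner_sub_left]; ring
      _ ≤ ⟪h' a, d⟫ + L * (t * ‖d‖) * ‖d‖ := by
          gcongr
          exact (real_inner_le_norm _ _).trans (by gcongr)
      _ = ⟪h' a, d⟫ + L * ‖d‖ ^ 2 * t := by ring
  have hle := image_le_of_deriv_right_le_deriv_boundary (a := 0) (b := 1)
    (fun t _ => (hasDerivAt_line t).continuousAt.continuousWithinAt)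
    (fun t _ => (hasDerivAt_line t).hasDerivWithinAt) (by simp)
    (fun t _ => (hasDerivAt_parabola t).continuousAt.continuousWithinAt)
    (fun t _ => (hasDerivAt_parabola t).hasDerivWithinAt) (fun t ht => deriv_le t ht.1)
    (Set.right_mem_Icc.2 zero_le_one)
  simpa [hd] using hle

lemma hasGradientAt_sub_const_mul [CompleteSpace E] {h g : E → ℝ} {u v x : E} (c : ℝ)
    (hh : HasGradientAt h u x) (hg : HasGradientAt g v x) :
    HasGradientAt (fun z => h z - c * g z) (u - c • v) x := by
  rw [hasGradientAt_iff_hasFDerivAt, map_sub, map_smul]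
  exact hh.hasFDerivAt.sub (hg.hasFDerivAt.const_mul c)

lemma isBigO_inner_of_isBigO_one {ι : Type*} {l : Filter ι} {u v : ι → E}
    (hu : u =O[l] fun _ => (1 : ℝ)) : (fun i => ⟪u i, v i⟫) =O[l] v := by
  have hmul := hu.norm_left.mul (isBigO_refl (fun i => ‖v i‖) l)
  simp only [one_mul] at hmul
  exact (IsBigO.of_norm_le fun i => abs_real_inner_le_norm (u i) (v i)).trans
    (isBigO_norm_right.1 hmul)

end Hilbert

section Boundedness

variable {ι E F : Type*} [SeminormedAddCommGroup E] [SeminormedAddCommGroup F]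
  {l : Filter ι} {s : Set E} {φ : E → F} {u v : ι → E} {w : ι → F}

lemma isBigO_smul_of_isBigO_one [NormedSpace ℝ E] {a : ι → ℝ} (ha : a =O[l] fun _ => (1 : ℝ))
    (hu : u =O[l] w) : (fun i => a i • u i) =O[l] w := by
  simpa only [smul_eq_mul, one_mul, isBigO_norm_right] using ha.smul hu.norm_right

lemma isBigO_one_comp_of_isCompact (hs : IsCompact s) (hφ : ContinuousOn φ s)
    (hu : ∀ i, u i ∈ s) : (fun i => φ (u i)) =O[l] fun _ => (1 : ℝ) := by
  obtain ⟨M, hM⟩ := hs.exists_bound_of_continuousOn hφ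
  exact IsBigO.of_bound M (Eventually.of_forall fun i => by simpa using hM (u i) (hu i))

lemma isBigO_comp_sub_comp_of_isCompact (hs : IsCompact s) (hφ : LocallyLipschitzOn s φ)
    (hu : ∀ i, u i ∈ s) (hv : ∀ i, v i ∈ s) :
    (fun i => φ (u i) - φ (v i)) =O[l] fun i => u i - v i := by
  obtain ⟨K, hK⟩ := hφ.exists_lipschitzOnWith_of_compact hs
  exact IsBigO.of_bound K (Eventually.of_forall fun i => hK.norm_sub_le (hu i) (hv i))

lemma locallyLipschitzOn_of_forall_exists_ball
    (hφ : ∀ z ∈ s, ∃ K : NNReal, ∃ δ > (0 : ℝ), LipschitzOnWith K φ (Metric.ball z δ ∩ s)) :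
    LocallyLipschitzOn s φ := by
  intro z hz
  obtain ⟨K, δ, hδ, hK⟩ := hφ z hz
  exact ⟨K, _, inter_mem (nhdsWithin_le_nhds (Metric.ball_mem_nhds z hδ)) self_mem_nhdsWithin, hK⟩

end Boundedness

section Subgradients

variable {n : ℕ} {φ f : EuclideanSpace ℝ (Fin n) → EReal}
  {ψ g h : EuclideanSpace ℝ (Fin n) → ℝ} {x p u v w y : EuclideanSpace ℝ (Fin n)} {r a c : ℝ}

lemma eq_of_mem_csub_of_hasGradientAt (hy : y ∈ csub g x) (hv : HasGradientAt g v x) : y = v := by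
  have hmin : IsLocalMin (fun z => g z - InnerProductSpace.toDual ℝ _ y z) x := by
    refine Eventually.of_forall fun z => ?_
    have hle := hy z
    rw [inner_sub_right] at hle
    simp only [InnerProductSpace.toDual_apply_apply]
    linarith
  have hzero := hmin.hasFDerivAt_eq_zero
    (hv.hasFDerivAt.sub (InnerProductSpace.toDual ℝ _ y).hasFDerivAt)
  exact ((InnerProductSpace.toDual ℝ _).injective (sub_eq_zero.1 hzero)).symm

lemma neg_le_sub_sub_div_iff {b : EReal} {s d ε : ℝ} (hd : 0 < d) :
    ((-ε : ℝ) : EReal) ≤ (b - r - s) / d ↔ ((r + s - ε * d : ℝ) : EReal) ≤ b := by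
  rw [EReal.le_div_iff_mul_le (by exact_mod_cast hd) (EReal.coe_ne_top d),
    EReal.le_sub_iff_add_le (by simp) (by simp), EReal.le_sub_iff_add_le (by simp) (by simp)]
  norm_cast
  rw [show -ε * d + s + r = r + s - ε * d by ring]

lemma mem_fsub_iff (hr : φ x = r) :
    y ∈ fsub φ x ↔ ∀ ε > 0, ∀ᶠ z in 𝓝 x,
      ((r + ⟪y, z - x⟫ - ε * ‖z - x‖ : ℝ) : EReal) ≤ φ z := by
  have hdiv (ε : ℝ) : (∀ᶠ z in 𝓝[≠] x,
        ((-ε : ℝ) : EReal) ≤ (φ z - r - (⟪y, z - x⟫ : ℝ)) / (‖z - x‖ : ℝ)) ↔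
      ∀ᶠ z in 𝓝 x, ((r + ⟪y, z - x⟫ - ε * ‖z - x‖ : ℝ) : EReal) ≤ φ z := by
    rw [eventually_nhdsWithin_iff]
    refine eventually_congr (Eventually.of_forall fun z => ?_)
    rcases eq_or_ne z x with rfl | hz
    · simp [hr]
    · rw [← neg_le_sub_sub_div_iff (norm_pos_iff.2 (sub_ne_zero.2 hz))]
      simp only [Set.mem_compl_iff, Set.mem_singleton_iff, hz, not_false_eq_true, forall_const]
  have hmem : y ∈ fsub φ x ↔ ∀ b < 0, ∀ᶠ z in 𝓝[≠] x,
      b ≤ (φ z - r - (⟪y, z - x⟫ : ℝ)) / (‖z - x‖ : ℝ) := by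
    rw [← le_liminf_iff', ← hr]
    exact and_iff_right (hr ▸ EReal.coe_ne_top r)
  simp only [hmem, ← hdiv]
  constructor
  · intro hlim ε hε
    exact hlim _ (by exact_mod_cast neg_lt_zero.2 hε)
  · intro hlim b hb
    obtain ⟨s, hbs, hs⟩ := EReal.lt_iff_exists_real_btwn.1 hb
    refine (hlim (-s) (neg_pos.2 (by exact_mod_cast hs))).mono fun z hz => hbs.le.trans ?_
    simpa using hz

lemma add_mem_fsub_add_of_hasGradientAt (hr : φ x = r) (hv : v ∈ fsub φ x)
    (hw : HasGradientAt ψ w x) : v + w ∈ fsub (fun z => φ z + (ψ z : EReal)) x := by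
  rw [mem_fsub_iff (r := r + ψ x) (by simp [hr])]
  intro ε hε
  filter_upwards [(mem_fsub_iff hr).1 hv (ε / 2) (half_pos hε),
    (hasGradientAt_iff_isLittleO.1 hw).def (half_pos hε)] with z hφz hψz
  have hψz' := (abs_le.1 hψz).1
  calc ((r + ψ x + ⟪v + w, z - x⟫ - ε * ‖z - x‖ : ℝ) : EReal)
      ≤ ((r + ⟪v, z - x⟫ - ε / 2 * ‖z - x‖ : ℝ) : EReal) + (ψ z : EReal) := by
        rw [inner_add_left]
        norm_cast
        linarith
    _ ≤ φ z + ψ z := by gcongr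

lemma Ffrac_of_ne (hg : g x ≠ 0) (hf : f x ≠ ⊤) :
    Ffrac f g h x = ((((f x).toReal + h x) / g x : ℝ) : EReal) :=
  if_pos ⟨hg, hf⟩

lemma coe_le_Ffrac_iff (hg : 0 < g x) (hf : f x ≠ ⊥) {t : ℝ} :
    (t : EReal) ≤ Ffrac f g h x ↔ ((t * g x - h x : ℝ) : EReal) ≤ f x := by
  rcases eq_or_ne (f x) ⊤ with htop | htop
  · simp [Ffrac, htop]
  · rw [Ffrac_of_ne hg.ne' htop, EReal.coe_le_coe_iff, le_div_iff₀ hg, ← sub_le_iff_le_add,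
      ← EReal.coe_le_coe_iff, EReal.coe_toReal htop hf]

lemma Ffrac_le_coe_iff (hnum : 0 ≤ f x + (h x : EReal)) (hpos : f x ≠ ⊤ → g x ≠ 0 → 0 < g x)
    (hnum_ne : g x = 0 → f x + (h x : EReal) ≠ 0) {t : ℝ} :
    Ffrac f g h x ≤ t ↔ f x ≤ ((t * g x - h x : ℝ) : EReal) := by
  induction hfx : f x with
  | bot => simp [hfx] at hnum
  | top =>
    simp only [Ffrac, hfx, ne_eq, not_true_eq_false, and_false, if_false, top_le_iff,
      EReal.coe_ne_top]
  | coe s =>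
    rw [hfx] at hnum hnum_ne
    norm_cast at hnum hnum_ne ⊢
    rcases eq_or_ne (g x) 0 with hgx | hgx
    · have hs : 0 < s + h x := hnum.lt_of_ne' (hnum_ne hgx)
      simp only [Ffrac, hgx, ne_eq, not_true_eq_false, false_and, if_false, mul_zero, top_le_iff,
        EReal.coe_ne_top, false_iff]
      linarith
    · have hfx' : f x ≠ ⊤ := hfx ▸ EReal.coe_ne_top s
      rw [Ffrac_of_ne hgx hfx', hfx, EReal.toReal_coe, EReal.coe_le_coe_iff,
        div_le_iff₀ (hpos hfx' hgx), le_sub_iff_add_le]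

lemma setOf_Ffrac_le_subset (t : ℝ) : {z | Ffrac f g h z ≤ t} ⊆ {z | g z ≠ 0} := by
  intro z hz hgz
  simp [Ffrac, hgz] at hz

lemma isClosed_setOf_Ffrac_le (hf : LowerSemicontinuous f) (hg : Continuous g) (hh : Continuous h)
    (hnum : ∀ z, 0 ≤ f z + (h z : EReal)) (hpos : ∀ z, f z ≠ ⊤ → g z ≠ 0 → 0 < g z)
    (hnum_ne : ∀ z, g z = 0 → f z + (h z : EReal) ≠ 0) (t : ℝ) :
    IsClosed {z | Ffrac f g h z ≤ t} := by
  simp only [Ffrac_le_coe_iff (hnum _) (hpos _) (hnum_ne _)]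
  exact hf.isClosed_epigraph.preimage (continuous_id.prodMk
    (continuous_coe_real_ereal.comp ((continuous_const.mul hg).sub hh)))

lemma eventually_mul_inner_sub_le (hg : ContinuousAt g p) (hgp : 0 < g p) {ε : ℝ} (hε : 0 < ε) :
    ∀ᶠ z in 𝓝 p,
      g z * (⟪w, z - p⟫ - ε * ‖z - p‖) ≤ g p * ⟪w, z - p⟫ - ε * g p / 4 * ‖z - p‖ := by
  set η := ε * g p / 4 with hη
  have hη_pos : 0 < η := by positivity
  have hg_half : ∀ᶠ z in 𝓝 p, g p / 2 < g z := hg.eventually (lt_mem_nhds (half_lt_self hgp))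
  have hg_near : ∀ᶠ z in 𝓝 p, |g z - g p| * ‖w‖ < η := by
    have hcont : ContinuousAt (fun z => |g z - g p| * ‖w‖) p := by fun_prop
    exact hcont.eventually (gt_mem_nhds (by simpa using hη_pos))
  filter_upwards [hg_half, hg_near] with z hgz hgpz
  have hdiff : (g z - g p) * ⟪w, z - p⟫ ≤ η * ‖z - p‖ :=
    calc (g z - g p) * ⟪w, z - p⟫ ≤ |g z - g p| * (‖w‖ * ‖z - p‖) := by
          refine (le_abs_self _).trans ?_
          rw [abs_mul]
          gcongr
          exact abs_real_inner_le_norm _ _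
      _ = |g z - g p| * ‖w‖ * ‖z - p‖ := (mul_assoc _ _ _).symm
      _ ≤ η * ‖z - p‖ := by gcongr
  have hslack : 2 * η * ‖z - p‖ ≤ ε * g z * ‖z - p‖ := by
    have hle : 2 * η ≤ ε * g z := by
      rw [hη]
      nlinarith
    exact mul_le_mul_of_nonneg_right hle (norm_nonneg _)
  linarith

lemma inv_smul_mem_fsub_Ffrac (hr : f p = r) (hc : c * g p = r + h p) (hg : ContinuousAt g p)
    (hgp : 0 < g p) (hw : w ∈ fsub (fun z => f z + ((h z - c * g z : ℝ) : EReal)) p) :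
    (g p)⁻¹ • w ∈ fsub (Ffrac f g h) p := by
  have hFp : Ffrac f g h p = (c : EReal) := by
    rw [Ffrac_of_ne hgp.ne' (hr ▸ EReal.coe_ne_top r), hr, EReal.toReal_coe, ← hc,
      mul_div_cancel_right₀ c hgp.ne']
  have hparam_zero : f p + ((h p - c * g p : ℝ) : EReal) = ((0 : ℝ) : EReal) := by
    rw [hr, hc]
    norm_cast
    ring
  rw [mem_fsub_iff hFp]
  intro ε hε
  filter_upwards [(mem_fsub_iff hparam_zero).1 hw (ε * g p / 4) (by positivity),
    eventually_mul_inner_sub_le (w := (g p)⁻¹ • w) hg hgp hε,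
    hg.eventually (lt_mem_nhds hgp)] with z hwz hmul hgz
  rw [← EReal.sub_le_iff_le_add (.inl (EReal.coe_ne_bot _)) (.inl (EReal.coe_ne_top _)),
    ← EReal.coe_sub] at hwz
  have hfz : f z ≠ ⊥ := ne_bot_of_le_ne_bot (EReal.coe_ne_bot _) hwz
  refine (coe_le_Ffrac_iff hgz hfz).2 (le_trans (EReal.coe_le_coe ?_) hwz)
  rw [real_inner_smul_left, mul_inv_cancel_left₀ hgp.ne'] at hmul
  rw [real_inner_smul_left]
  linarith

lemma ne_top_of_mem_proxSet (ha : 0 < a) (hp : p ∈ proxSet (fun z => (a : EReal) * f z) u)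
    (hx : f x ≠ ⊤) : f p ≠ ⊤ := by
  intro htop
  have hle := hp x
  simp only at hle
  rw [htop, EReal.coe_mul_top_of_pos ha, EReal.top_add_coe, top_le_iff] at hle
  induction hfx : f x with
  | bot => simp [hfx, EReal.coe_mul_bot_of_pos ha] at hle
  | top => exact hx hfx
  | coe s =>
    rw [hfx] at hle
    exact EReal.coe_ne_top (a * s + ‖x - u‖ ^ 2 / 2) (by exact_mod_cast hle)

lemma le_of_mem_proxSet (ha : 0 < a) (hp : p ∈ proxSet (fun z => (a : EReal) * f z) (x - a • v))
    (hr : f p = r) (z : EuclideanSpace ℝ (Fin n)) :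
    ((r + ⟪a⁻¹ • (x - p) - v, z - p⟫ - (2 * a)⁻¹ * ‖z - p‖ ^ 2 : ℝ) : EReal) ≤ f z := by
  have hle := hp z
  simp only [hr] at hle
  induction hfz : f z with
  | bot =>
    rw [hfz, EReal.coe_mul_bot_of_pos ha, EReal.bot_add, le_bot_iff] at hle
    exact absurd (by exact_mod_cast hle) (EReal.coe_ne_bot (a * r + ‖p - (x - a • v)‖ ^ 2 / 2))
  | top => exact le_top
  | coe s =>
    rw [hfz] at hle
    norm_cast at hle ⊢
    have hexpand : ‖z - (x - a • v)‖ ^ 2 =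
        ‖z - p‖ ^ 2 - 2 * a * ⟪a⁻¹ • (x - p) - v, z - p⟫ + ‖p - (x - a • v)‖ ^ 2 := by
      have hsplit : z - (x - a • v) = (z - p) - a • (a⁻¹ • (x - p) - v) := by
        rw [smul_sub, smul_inv_smul₀ ha.ne']; abel
      have hp_split : p - (x - a • v) = -(a • (a⁻¹ • (x - p) - v)) := by
        rw [smul_sub, smul_inv_smul₀ ha.ne']; abel
      rw [hsplit, hp_split, norm_sub_sq_real, norm_neg, real_inner_smul_right, real_inner_comm]
      ring
    rw [hexpand] at hle
    have hcancel : a * ((2 * a)⁻¹ * ‖z - p‖ ^ 2) = ‖z - p‖ ^ 2 / 2 := by field_simp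
    refine le_of_mul_le_mul_left ?_ ha
    linarith

lemma mem_fsub_of_mem_proxSet (ha : 0 < a)
    (hp : p ∈ proxSet (fun z => (a : EReal) * f z) (x - a • v)) (hr : f p = r) :
    a⁻¹ • (x - p) - v ∈ fsub f p := by
  rw [mem_fsub_iff hr]
  intro ε hε
  have hnear : ∀ᶠ z in 𝓝 p, (2 * a)⁻¹ * ‖z - p‖ < ε := by
    have hcont : ContinuousAt (fun z => (2 * a)⁻¹ * ‖z - p‖) p := by fun_prop
    exact hcont.eventually (gt_mem_nhds (by simpa using hε))
  filter_upwards [hnear] with z hz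
  refine le_trans (EReal.coe_le_coe ?_) (le_of_mem_proxSet ha hp hr z)
  rw [sq, ← mul_assoc]
  gcongr

lemma add_sub_mul_le_of_mem_proxSet {h' : EuclideanSpace ℝ (Fin n) → EuclideanSpace ℝ (Fin n)}
    {L : NNReal} {s : ℝ} (hgrad : ∀ z, HasGradientAt h (h' z) z) (hlip : LipschitzWith L h')
    (ha : 0 < a) (haL : a * L ≤ 1) (hc : 0 ≤ c) (hy : y ∈ csub g x)
    (hp : p ∈ proxSet (fun z => (a : EReal) * f z) (x - a • (h' x - c • y)))
    (hs : f x = s) (hr : f p = r) : r + h p - c * g p ≤ s + h x - c * g x := by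
  have hprox := le_of_mem_proxSet ha hp hr x
  rw [hs, EReal.coe_le_coe_iff] at hprox
  have hinner : ⟪a⁻¹ • (x - p) - (h' x - c • y), x - p⟫ =
      a⁻¹ * ‖p - x‖ ^ 2 + ⟪h' x, p - x⟫ - c * ⟪y, p - x⟫ := by
    rw [← neg_sub p x]
    generalize p - x = d
    simp only [inner_sub_left, inner_neg_right, smul_neg, inner_neg_left, real_inner_smul_left,
      real_inner_self_eq_norm_sq]
    ring
  rw [hinner, norm_sub_rev x p] at hprox
  have hdescent := le_add_inner_add_sq_of_lipschitzWith_gradient hgrad hlip x p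
  have hsub := mul_le_mul_of_nonneg_left (hy p) hc
  have hstep : (L / 2 : ℝ) * ‖p - x‖ ^ 2 ≤ (2 * a)⁻¹ * ‖p - x‖ ^ 2 := by
    gcongr
    rw [mul_inv, inv_mul_eq_div, div_le_div_iff_of_pos_right two_pos, ← one_div, le_div_iff₀' ha]
    exact haL
  have hinv : a⁻¹ = 2 * (2 * a)⁻¹ := by field_simp
  rw [hinv] at hprox
  linarith

lemma mul_sub_le_add_inner_of_mem_proxSet
    {h' : EuclideanSpace ℝ (Fin n) → EuclideanSpace ℝ (Fin n)} {L : NNReal}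
    {q : EuclideanSpace ℝ (Fin n)} {t : ℝ} (hgrad : ∀ z, HasGradientAt h (h' z) z)
    (hlip : LipschitzWith L h') (ha : 0 < a) (hc : 0 ≤ c) (hy : y ∈ csub g q)
    (hp : p ∈ proxSet (fun z => (a : EReal) * f z) (x - a • v)) (hr : f p = r) (ht : f q = t) :
    c * g q - (t + h q) ≤ c * g p - (r + h p) +
      ⟪c • y - h' q - (a⁻¹ • (x - p) - v) + ((2 * a)⁻¹ + L / 2) • (q - p), q - p⟫ := by
  have hprox := le_of_mem_proxSet ha hp hr q
  rw [ht, EReal.coe_le_coe_iff] at hprox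
  have hdescent := le_add_inner_add_sq_of_lipschitzWith_gradient hgrad hlip q p
  have hsub := mul_le_mul_of_nonneg_left (hy p) hc
  rw [← neg_sub q p, inner_neg_right] at hdescent hsub
  rw [norm_neg] at hdescent
  rw [inner_add_left, inner_sub_left _ (a⁻¹ • (x - p) - v), inner_sub_left, real_inner_smul_left,
    real_inner_smul_left (q - p), real_inner_self_eq_norm_sq]
  linarith

end Subgradients

section PGSA

/-- A fractional program `min (f + h) / g`: the problem data of PGSA, where `h'` and `g'` stand for
the gradients of `h` and `g`. -/
structure FractionalProgram {n : ℕ} (f : EuclideanSpace ℝ (Fin n) → EReal)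
    (g h : EuclideanSpace ℝ (Fin n) → ℝ)
    (g' h' : EuclideanSpace ℝ (Fin n) → EuclideanSpace ℝ (Fin n)) (L : NNReal) : Prop where
  lowerSemicontinuous : LowerSemicontinuous f
  continuous_denom : Continuous g
  hasGradientAt_denom : ∀ z, g z ≠ 0 → HasGradientAt g (g' z) z
  locallyLipschitzOn_grad_denom : LocallyLipschitzOn {z | g z ≠ 0} g'
  hasGradientAt_smooth : ∀ z, HasGradientAt h (h' z) z
  lipschitzWith_grad_smooth : LipschitzWith L h'
  num_nonneg : ∀ z, 0 ≤ f z + (h z : EReal)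
  denom_pos : ∀ z, f z ≠ ⊤ → g z ≠ 0 → 0 < g z
  num_ne_zero : ∀ z, g z = 0 → f z + (h z : EReal) ≠ 0
  isBounded_sublevel : ∀ t : ℝ, Bornology.IsBounded {z | Ffrac f g h z ≤ (t : EReal)}

/-- Sequences generated by PGSA with step sizes `α k ∈ [αlo, 1 / L]`; the upper bound is written
as `α k * L ≤ 1` so that `L = 0` is meaningful. -/
structure IsPGSASequence {n : ℕ} (f : EuclideanSpace ℝ (Fin n) → EReal)
    (g h : EuclideanSpace ℝ (Fin n) → ℝ)
    (h' : EuclideanSpace ℝ (Fin n) → EuclideanSpace ℝ (Fin n)) (L : NNReal)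
    (x y : ℕ → EuclideanSpace ℝ (Fin n)) (c α : ℕ → ℝ) (αlo : ℝ) : Prop where
  feasible_zero : g (x 0) ≠ 0 ∧ f (x 0) ≠ ⊤
  lower_pos : 0 < αlo
  lower_le : ∀ k, αlo ≤ α k
  mul_le_one : ∀ k, α k * L ≤ 1
  mem_csub : ∀ k, y (k + 1) ∈ csub g (x k)
  ratio_eq : ∀ k, c k = ((f (x k)).toReal + h (x k)) / g (x k)
  mem_proxSet : ∀ k, x (k + 1) ∈ proxSet (fun z => (α k : EReal) * f z)
    (x k - α k • h' (x k) + (α k * c k) • y (k + 1))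

variable {n : ℕ} {f : EuclideanSpace ℝ (Fin n) → EReal} {g h : EuclideanSpace ℝ (Fin n) → ℝ}
  {g' h' : EuclideanSpace ℝ (Fin n) → EuclideanSpace ℝ (Fin n)} {L : NNReal}
  {x y : ℕ → EuclideanSpace ℝ (Fin n)} {c α : ℕ → ℝ} {αlo : ℝ}

/-- The gradient at `x k` of `h - c k * g`; a PGSA step is a proximal gradient step for
`f + (h - c k * g)`. -/
def parametricGrad (g' h' : EuclideanSpace ℝ (Fin n) → EuclideanSpace ℝ (Fin n))
    (x : ℕ → EuclideanSpace ℝ (Fin n)) (c : ℕ → ℝ) (k : ℕ) : EuclideanSpace ℝ (Fin n) :=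
  h' (x k) - c k • g' (x k)

lemma parametricGrad_succ_sub (k : ℕ) :
    parametricGrad g' h' x c (k + 1) - parametricGrad g' h' x c k =
      (h' (x (k + 1)) - h' (x k)) - (c k • (g' (x (k + 1)) - g' (x k)) +
        (c (k + 1) - c k) • g' (x (k + 1))) := by
  simp only [parametricGrad, smul_sub, sub_smul]
  abel

/-- The subgradient of `f` at `x (k + 1)` given by the optimality condition of the proximal
step. -/
def proxSubgrad (g' h' : EuclideanSpace ℝ (Fin n) → EuclideanSpace ℝ (Fin n))
    (x : ℕ → EuclideanSpace ℝ (Fin n)) (c α : ℕ → ℝ) (k : ℕ) : EuclideanSpace ℝ (Fin n) :=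
  (α k)⁻¹ • (x k - x (k + 1)) - parametricGrad g' h' x c k

lemma proxSubgrad_add_parametricGrad_succ (k : ℕ) :
    proxSubgrad g' h' x c α k + parametricGrad g' h' x c (k + 1) =
      (parametricGrad g' h' x c (k + 1) - parametricGrad g' h' x c k) -
        (α k)⁻¹ • (x (k + 1) - x k) := by
  rw [proxSubgrad, ← neg_sub (x (k + 1)), smul_neg]
  abel

/-- The subgradient `ω^{k+1}` of `F` at `x (k + 1)` witnessing the relative error bound. -/
def pgsaResidual (g : EuclideanSpace ℝ (Fin n) → ℝ)
    (g' h' : EuclideanSpace ℝ (Fin n) → EuclideanSpace ℝ (Fin n))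
    (x : ℕ → EuclideanSpace ℝ (Fin n)) (c α : ℕ → ℝ) (k : ℕ) : EuclideanSpace ℝ (Fin n) :=
  (g (x (k + 1)))⁻¹ • (proxSubgrad g' h' x c α k + parametricGrad g' h' x c (k + 1))

namespace FractionalProgram

variable (P : FractionalProgram f g h g' h' L)
include P

lemma coe_toReal {z : EuclideanSpace ℝ (Fin n)} (hz : f z ≠ ⊤) :
    f z = ((f z).toReal : EReal) := by
  refine (EReal.coe_toReal hz fun hbot => ?_).symm
  simpa [hbot] using P.num_nonneg z

lemma toReal_num_nonneg {z : EuclideanSpace ℝ (Fin n)} (hz : f z ≠ ⊤) :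
    0 ≤ (f z).toReal + h z := by
  have hnum := P.num_nonneg z
  rw [P.coe_toReal hz] at hnum
  exact_mod_cast hnum

lemma isCompact_sublevel (t : ℝ) : IsCompact {z | Ffrac f g h z ≤ (t : EReal)} := by
  have hh : Continuous h := continuous_iff_continuousAt.2 fun z =>
    (P.hasGradientAt_smooth z).hasFDerivAt.continuousAt
  exact Metric.isCompact_of_isClosed_isBounded (isClosed_setOf_Ffrac_le P.lowerSemicontinuous
    P.continuous_denom hh P.num_nonneg P.denom_pos P.num_ne_zero t) (P.isBounded_sublevel t)

end FractionalProgram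

namespace IsPGSASequence

lemma stepSize_pos (S : IsPGSASequence f g h h' L x y c α αlo) (k : ℕ) : 0 < α k :=
  S.lower_pos.trans_le (S.lower_le k)

lemma mem_proxSet_sub_smul (S : IsPGSASequence f g h h' L x y c α αlo) (k : ℕ) :
    x (k + 1) ∈ proxSet (fun z => (α k : EReal) * f z)
      (x k - α k • (h' (x k) - c k • y (k + 1))) := by
  have hmem := S.mem_proxSet k
  rwa [sub_add, mul_smul, ← smul_sub] at hmem

lemma ratio_mul_denom (S : IsPGSASequence f g h h' L x y c α αlo) {k : ℕ}
    (hk : g (x k) ≠ 0) : c k * g (x k) = (f (x k)).toReal + h (x k) := by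
  rw [S.ratio_eq, div_mul_cancel₀ _ hk]

lemma isBigO_one_inv_stepSize (S : IsPGSASequence f g h h' L x y c α αlo) :
    (fun k => (α k)⁻¹) =O[atTop] fun _ => (1 : ℝ) := by
  refine IsBigO.of_bound αlo⁻¹ (Eventually.of_forall fun k => ?_)
  rw [norm_inv, Real.norm_of_nonneg (S.stepSize_pos k).le, norm_one, mul_one]
  exact inv_anti₀ S.lower_pos (S.lower_le k)

lemma pgsaResidual_eq_zero (S : IsPGSASequence f g h h' L x y c α αlo) {k : ℕ}
    (hk : x (k + 1) - x k = 0) : pgsaResidual g g' h' x c α k = 0 := by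
  have hx : x (k + 1) = x k := sub_eq_zero.1 hk
  have hc : c (k + 1) = c k := by rw [S.ratio_eq, S.ratio_eq, hx]
  simp [pgsaResidual, proxSubgrad, parametricGrad, hx, hc]

variable (P : FractionalProgram f g h g' h' L) (S : IsPGSASequence f g h h' L x y c α αlo)
include P S

lemma Ffrac_succ_le {k : ℕ} (hgk : g (x k) ≠ 0) (hfk : f (x k) ≠ ⊤) :
    Ffrac f g h (x (k + 1)) ≤ (c k : EReal) := by
  have hf_succ := ne_top_of_mem_proxSet (S.stepSize_pos k) (S.mem_proxSet_sub_smul k) hfk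
  have hc : 0 ≤ c k := S.ratio_eq k ▸
    div_nonneg (P.toReal_num_nonneg hfk) (P.denom_pos _ hfk hgk).le
  have hdecrease := add_sub_mul_le_of_mem_proxSet P.hasGradientAt_smooth
    P.lipschitzWith_grad_smooth (S.stepSize_pos k) (S.mul_le_one k) hc (S.mem_csub k)
    (S.mem_proxSet_sub_smul k) (P.coe_toReal hfk) (P.coe_toReal hf_succ)
  rw [Ffrac_le_coe_iff (P.num_nonneg _) (P.denom_pos _) (P.num_ne_zero _), P.coe_toReal hf_succ,
    EReal.coe_le_coe_iff]
  linarith [S.ratio_mul_denom hgk]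

lemma feasible (k : ℕ) : g (x k) ≠ 0 ∧ f (x k) ≠ ⊤ := by
  induction k with
  | zero => exact S.feasible_zero
  | succ k ih =>
    by_contra hinfeasible
    have hle := S.Ffrac_succ_le P ih.1 ih.2
    rw [Ffrac, if_neg hinfeasible, top_le_iff] at hle
    exact EReal.coe_ne_top _ hle

lemma denom_pos (k : ℕ) : 0 < g (x k) :=
  P.denom_pos _ (S.feasible P k).2 (S.feasible P k).1

lemma Ffrac_eq (k : ℕ) : Ffrac f g h (x k) = (c k : EReal) := by
  rw [S.ratio_eq, Ffrac_of_ne (S.feasible P k).1 (S.feasible P k).2]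

lemma ratio_antitone : Antitone c := by
  refine antitone_nat_of_succ_le fun k => ?_
  rw [← EReal.coe_le_coe_iff, ← S.Ffrac_eq P]
  exact S.Ffrac_succ_le P (S.feasible P k).1 (S.feasible P k).2

lemma ratio_nonneg (k : ℕ) : 0 ≤ c k :=
  S.ratio_eq k ▸ div_nonneg (P.toReal_num_nonneg (S.feasible P k).2) (S.denom_pos P k).le

lemma mem_sublevel (k : ℕ) : x k ∈ {z | Ffrac f g h z ≤ (c 0 : EReal)} := by
  change Ffrac f g h (x k) ≤ c 0
  rw [S.Ffrac_eq P]
  exact_mod_cast S.ratio_antitone P k.zero_le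

lemma subgrad_denom_eq (k : ℕ) : y (k + 1) = g' (x k) :=
  eq_of_mem_csub_of_hasGradientAt (S.mem_csub k) (P.hasGradientAt_denom _ (S.feasible P k).1)

lemma mem_proxSet_sub_smul_parametricGrad (k : ℕ) :
    x (k + 1) ∈ proxSet (fun z => (α k : EReal) * f z)
      (x k - α k • parametricGrad g' h' x c k) := by
  rw [parametricGrad, ← S.subgrad_denom_eq P]
  exact S.mem_proxSet_sub_smul k

lemma proxSubgrad_mem_fsub (k : ℕ) : proxSubgrad g' h' x c α k ∈ fsub f (x (k + 1)) :=
  mem_fsub_of_mem_proxSet (S.stepSize_pos k) (S.mem_proxSet_sub_smul_parametricGrad P k)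
    (P.coe_toReal (S.feasible P (k + 1)).2)

lemma pgsaResidual_mem_fsub (k : ℕ) :
    pgsaResidual g g' h' x c α k ∈ fsub (Ffrac f g h) (x (k + 1)) := by
  have hf := P.coe_toReal (S.feasible P (k + 1)).2
  have hgrad := hasGradientAt_sub_const_mul (c (k + 1)) (P.hasGradientAt_smooth (x (k + 1)))
    (P.hasGradientAt_denom _ (S.feasible P (k + 1)).1)
  exact inv_smul_mem_fsub_Ffrac hf (S.ratio_mul_denom (S.feasible P (k + 1)).1)
    P.continuous_denom.continuousAt (S.denom_pos P (k + 1))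
    (add_mem_fsub_add_of_hasGradientAt hf (S.proxSubgrad_mem_fsub P k) hgrad)

lemma ratio_sub_ratio_le_inner (k : ℕ) :
    c (k + 1) - c (k + 2) ≤ ⟪(g (x (k + 2)))⁻¹ • (c (k + 1) • g' (x (k + 2)) - h' (x (k + 2)) -
      proxSubgrad g' h' x c α k + ((2 * α k)⁻¹ + L / 2) • (x (k + 2) - x (k + 1))),
        x (k + 2) - x (k + 1)⟫ := by
  have hle := mul_sub_le_add_inner_of_mem_proxSet P.hasGradientAt_smooth
    P.lipschitzWith_grad_smooth (S.stepSize_pos k) (S.ratio_nonneg P (k + 1)) (S.mem_csub (k + 2))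
    (S.mem_proxSet_sub_smul_parametricGrad P k) (P.coe_toReal (S.feasible P (k + 1)).2)
    (P.coe_toReal (S.feasible P (k + 2)).2)
  rw [← S.ratio_mul_denom (S.feasible P (k + 1)).1, ← S.ratio_mul_denom (S.feasible P (k + 2)).1,
    sub_self, zero_add, ← sub_mul, S.subgrad_denom_eq P] at hle
  rwa [real_inner_smul_left, inv_mul_eq_div, le_div_iff₀ (S.denom_pos P (k + 2))]

lemma isBigO_one_comp {F : Type*} [SeminormedAddCommGroup F]
    {φ : EuclideanSpace ℝ (Fin n) → F} (hφ : ContinuousOn φ {z | g z ≠ 0}) (σ : ℕ → ℕ) :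
    (fun k => φ (x (σ k))) =O[atTop] fun _ => (1 : ℝ) :=
  isBigO_one_comp_of_isCompact (P.isCompact_sublevel (c 0))
    (hφ.mono (setOf_Ffrac_le_subset (c 0))) fun k => S.mem_sublevel P (σ k)

lemma isBigO_one_iterate (σ : ℕ → ℕ) : (fun k => x (σ k)) =O[atTop] fun _ => (1 : ℝ) :=
  S.isBigO_one_comp P continuousOn_id σ

lemma isBigO_one_grad_denom (σ : ℕ → ℕ) :
    (fun k => g' (x (σ k))) =O[atTop] fun _ => (1 : ℝ) :=
  S.isBigO_one_comp P P.locallyLipschitzOn_grad_denom.continuousOn σ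

lemma isBigO_one_grad_smooth (σ : ℕ → ℕ) :
    (fun k => h' (x (σ k))) =O[atTop] fun _ => (1 : ℝ) :=
  S.isBigO_one_comp P P.lipschitzWith_grad_smooth.continuous.continuousOn σ

lemma isBigO_one_inv_denom (σ : ℕ → ℕ) :
    (fun k => (g (x (σ k)))⁻¹) =O[atTop] fun _ => (1 : ℝ) :=
  S.isBigO_one_comp P (P.continuous_denom.continuousOn.inv₀ fun _ hz => hz) σ

lemma isBigO_one_ratio (σ : ℕ → ℕ) : (fun k => c (σ k)) =O[atTop] fun _ => (1 : ℝ) := by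
  refine IsBigO.of_bound (c 0) (Eventually.of_forall fun k => ?_)
  rw [Real.norm_of_nonneg (S.ratio_nonneg P _), norm_one, mul_one]
  exact S.ratio_antitone P (Nat.zero_le _)

lemma isBigO_one_parametricGrad :
    parametricGrad g' h' x c =O[atTop] fun _ => (1 : ℝ) :=
  (S.isBigO_one_grad_smooth P id).sub
    (isBigO_smul_of_isBigO_one (S.isBigO_one_ratio P id) (S.isBigO_one_grad_denom P id))

lemma isBigO_one_proxSubgrad :
    proxSubgrad g' h' x c α =O[atTop] fun _ => (1 : ℝ) :=
  (isBigO_smul_of_isBigO_one S.isBigO_one_inv_stepSize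
    ((S.isBigO_one_iterate P id).sub (S.isBigO_one_iterate P (· + 1)))).sub
    (S.isBigO_one_parametricGrad P)

lemma isBigO_ratio_sub : (fun k => c (k + 1) - c k) =O[atTop] fun k => x (k + 1) - x k := by
  rw [← map_add_atTop_eq_nat 1, isBigO_map]
  have hstep : (fun k => (2 * α k)⁻¹ + (L : ℝ) / 2) =O[atTop] fun _ => (1 : ℝ) := by
    simp only [mul_inv]
    exact (S.isBigO_one_inv_stepSize.const_mul_left _).add (isBigO_const_const _ one_ne_zero _)
  have hslope := isBigO_smul_of_isBigO_one (S.isBigO_one_inv_denom P (· + 2))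
    ((((isBigO_smul_of_isBigO_one (S.isBigO_one_ratio P (· + 1))
      (S.isBigO_one_grad_denom P (· + 2))).sub (S.isBigO_one_grad_smooth P (· + 2))).sub
        (S.isBigO_one_proxSubgrad P)).add (isBigO_smul_of_isBigO_one hstep
          ((S.isBigO_one_iterate P (· + 2)).sub (S.isBigO_one_iterate P (· + 1)))))
  refine IsBigO.trans (IsBigO.of_norm_le fun k => ?_) (isBigO_inner_of_isBigO_one hslope).norm_left
  have hmono : c (k + 2) ≤ c (k + 1) := S.ratio_antitone P (Nat.le_succ _)
  rw [Function.comp_apply, Real.norm_eq_abs, abs_sub_comm, abs_of_nonneg (sub_nonneg.2 hmono)]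
  exact (S.ratio_sub_ratio_le_inner P k).trans (le_abs_self _)

lemma isBigO_grad_denom_sub :
    (fun k => g' (x (k + 1)) - g' (x k)) =O[atTop] fun k => x (k + 1) - x k :=
  isBigO_comp_sub_comp_of_isCompact (P.isCompact_sublevel (c 0))
    (P.locallyLipschitzOn_grad_denom.mono (setOf_Ffrac_le_subset (c 0)))
    (fun k => S.mem_sublevel P (k + 1)) (S.mem_sublevel P)

lemma isBigO_parametricGrad_sub :
    (fun k => parametricGrad g' h' x c (k + 1) - parametricGrad g' h' x c k) =O[atTop]
      fun k => x (k + 1) - x k := by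
  have hsmooth : (fun k => h' (x (k + 1)) - h' (x k)) =O[atTop] fun k => x (k + 1) - x k :=
    IsBigO.of_bound L (Eventually.of_forall fun k => P.lipschitzWith_grad_smooth.norm_sub_le _ _)
  have hratio : (fun k => (c (k + 1) - c k) • g' (x (k + 1))) =O[atTop]
      fun k => x (k + 1) - x k := by
    have hsmul := (S.isBigO_ratio_sub P).norm_right.smul (S.isBigO_one_grad_denom P (· + 1))
    simpa only [smul_eq_mul, mul_one, isBigO_norm_right] using hsmul
  simp only [parametricGrad_succ_sub]
  exact hsmooth.sub ((isBigO_smul_of_isBigO_one (S.isBigO_one_ratio P id)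
    (S.isBigO_grad_denom_sub P)).add hratio)

lemma isBigO_pgsaResidual :
    pgsaResidual g g' h' x c α =O[atTop] fun k => x (k + 1) - x k := by
  have hsum : (fun k => proxSubgrad g' h' x c α k + parametricGrad g' h' x c (k + 1)) =O[atTop]
      fun k => x (k + 1) - x k := by
    simp only [proxSubgrad_add_parametricGrad_succ]
    exact (S.isBigO_parametricGrad_sub P).sub
      (isBigO_smul_of_isBigO_one S.isBigO_one_inv_stepSize (isBigO_refl _ _))
  exact isBigO_smul_of_isBigO_one (S.isBigO_one_inv_denom P (· + 1)) hsum

end IsPGSASequence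

theorem pgsa_relative_error_general (P : FractionalProgram f g h g' h' L)
    (S : IsPGSASequence f g h h' L x y c α αlo) :
    ∃ b > (0 : ℝ), ∀ k, ∃ ω ∈ fsub (Ffrac f g h) (x (k + 1)), ‖ω‖ ≤ b * ‖x (k + 1) - x k‖ := by
  obtain ⟨C, hC⟩ := (isBigO_nat_atTop_iff fun _ => S.pgsaResidual_eq_zero).1
    (S.isBigO_pgsaResidual P)
  refine ⟨max C 1, by positivity, fun k => ⟨_, S.pgsaResidual_mem_fsub P k, (hC k).trans ?_⟩⟩
  gcongr
  exact le_max_left C 1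

end PGSA

/-- Lemma 4.8: relative error condition for the PGSA sequence. -/
theorem pgsa_relative_error
    {n : ℕ} (hn : 1 ≤ n)
    (f : EuclideanSpace ℝ (Fin n) → EReal) (g h : EuclideanSpace ℝ (Fin n) → ℝ)
    (h' : EuclideanSpace ℝ (Fin n) → EuclideanSpace ℝ (Fin n)) (L : ℝ)
    (hf_ne_bot : ∀ z, f z ≠ ⊥) (hf_proper : ∃ z, f z ≠ ⊤)
    (hf_lsc : LowerSemicontinuous f)
    (hf_bdd : ∃ m : ℝ, ∀ z, (m : EReal) ≤ f z)
    (hf_cont : ContinuousOn f {z | f z ≠ ⊤})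
    (hg_cvx : ConvexOn ℝ Set.univ g)
    (hL : 0 < L)
    (hh_grad : ∀ z, HasGradientAt h (h' z) z)
    (hh_lip : LipschitzWith (Real.toNNReal L) h')
    (hΩ : ∃ z, g z ≠ 0)
    (hfh : ∀ z, 0 ≤ f z + ((h z : ℝ) : EReal))
    (hg_pos : ∀ z, f z ≠ ⊤ → g z ≠ 0 → 0 < g z)
    (hA1 : ∀ z, g z = 0 → f z + ((h z : ℝ) : EReal) ≠ 0)
    (hA2 : ∀ t : ℝ, Bornology.IsBounded {z | Ffrac f g h z ≤ (t : EReal)})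
    (hA3 : ∀ z, f z ≠ ⊤ → ∃ K : ℝ, ∃ δ > (0 : ℝ), ∀ u, ‖u - z‖ < δ → f u ≠ ⊤ →
      ∀ v, ‖v - z‖ < δ → f v ≠ ⊤ → |(f u).toReal - (f v).toReal| ≤ K * ‖u - v‖)
    (g' : EuclideanSpace ℝ (Fin n) → EuclideanSpace ℝ (Fin n))
    (hA4_grad : ∀ z, g z ≠ 0 → HasGradientAt g (g' z) z)
    (hA4_cont : ContinuousOn g' {z | g z ≠ 0})
    (hA4_lip : ∀ z, g z ≠ 0 → ∃ K : NNReal, ∃ δ > (0 : ℝ),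
      LipschitzOnWith K g' (Metric.ball z δ ∩ {w | g w ≠ 0}))
    (x y : ℕ → EuclideanSpace ℝ (Fin n)) (c α : ℕ → ℝ) (αlo αhi : ℝ)
    (hx0 : g (x 0) ≠ 0 ∧ f (x 0) ≠ ⊤)
    (hαlo : 0 < αlo) (hαhi : αhi < 1 / L) (hα : ∀ k, αlo ≤ α k ∧ α k ≤ αhi)
    (hy : ∀ k, y (k + 1) ∈ csub g (x k))
    (hc : ∀ k, c k = ((f (x k)).toReal + h (x k)) / g (x k))
    (hiter : ∀ k, x (k + 1) ∈ proxSet (fun z => ((α k : ℝ) : EReal) * f z)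
      (x k - α k • h' (x k) + (α k * c k) • y (k + 1)))
    : ∃ b > (0 : ℝ), ∀ k, ∃ ω ∈ fsub (Ffrac f g h) (x (k + 1)),
        ‖ω‖ ≤ b * ‖x (k + 1) - x k‖ := by
  have hαL (k : ℕ) : α k * L.toNNReal ≤ 1 := by
    rw [Real.coe_toNNReal L hL.le]
    exact (le_div_iff₀ hL).1 ((hα k).2.trans hαhi.le)
  exact pgsa_relative_error_general
    ⟨hf_lsc, hg_cvx.locallyLipschitz.continuous, hA4_grad,
      locallyLipschitzOn_of_forall_exists_ball hA4_lip, hh_grad, hh_lip, hfh, hg_pos, hA1, hA2⟩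
    ⟨hx0, hαlo, fun k => (hα k).1, hαL, hy, hc, hiter⟩
end
end

section
/- Let x ∈ C and Λ := supp(x). Then: (i) if ‖x‖₀ < r then ∂̂ι_C(x) = {t·x : t ∈ ℝ}, while if ‖x‖₀ = r then ∂̂ι_C(x) = {v ∈ ℝⁿ : there exists t ∈ ℝ with v_i = t·x_i for all i ∈ Λ}; (ii) for every v in the limiting subdifferential ∂ι_C(x) there exists t ∈ ℝ with v_i = t·x_i for all i ∈ Λ; (iii) if r = n (so that C is the Euclidean unit sphere) then ∂̂ι_C(x) = ∂ι_C(x) = {t·x : t ∈ ℝ}. -/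
open Filter Topology
open scoped RealInnerProductSpace

noncomputable section

/-- The support of a vector, as a finset. -/
def suppF {n : ℕ} (x : EuclideanSpace ℝ (Fin n)) : Finset (Fin n) :=
  Finset.univ.filter (fun i => x i ≠ 0)

/-- The sparse unit sphere C = {x : ℝⁿ | ‖x‖₀ ≤ r, ‖x‖₂ = 1}. -/
def sphC (n r : ℕ) : Set (EuclideanSpace ℝ (Fin n)) :=
  {x | (suppF x).card ≤ r ∧ ‖x‖ = 1}

open Classical in
/-- The indicator function of C, with values in EReal. -/
def indC (n r : ℕ) : EuclideanSpace ℝ (Fin n) → EReal :=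
  fun x => if x ∈ sphC n r then 0 else ⊤

/-!
Near a point `x` of `C`, the vectors of `C` are unit vectors whose support contains that of `x`.
If `x` has `r` nonzero entries, `C` therefore agrees near `x` with the unit sphere of the
coordinate subspace on `supp x`. If it has fewer, `C` contains, for every `j`, the unit sphere of
the coordinate subspace on `supp x ∪ {j}`. Both cases reduce to one computation: the Fréchet
normals at `x` to the unit sphere of a subspace `L` are the vectors `t • x + w` with `w ⊥ L`.
Great circles through `x` show that nothing else is normal, and `⟪x, z - x⟫ = -‖z - x‖² / 2` on
the sphere shows that `t • x` is. The multiplier is `t = ⟪v, x⟫`, which is continuous in `(v, x)`,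
so the description survives passage to limits.
-/

section FrechetNormalCone

variable {E : Type*} [NormedAddCommGroup E] [InnerProductSpace ℝ E]
  {S T : Set E} {v x y : E} {L : Submodule ℝ E}

/-- The Fréchet (regular) normal cone to `S` at `x`: the Fréchet subdifferential at `x ∈ S` of the
indicator function of `S`, free of extended-real arithmetic. Membership of `x` in `S` is not part of
the definition. -/
def frechetNormalCone (S : Set E) (x : E) : Set E :=
  {v | ∀ ε > 0, ∀ᶠ z in 𝓝[S] x, ⟪v, z - x⟫ ≤ ε * ‖z - x‖}

theorem frechetNormalCone_anti (hST : S ⊆ T) : frechetNormalCone T x ⊆ frechetNormalCone S x :=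
  fun _ hv ε hε => (hv ε hε).filter_mono (nhdsWithin_mono x hST)

theorem frechetNormalCone_congr (hST : S =ᶠ[𝓝 x] T) :
    frechetNormalCone S x = frechetNormalCone T x := by
  simp only [frechetNormalCone, nhdsWithin_eq_iff_eventuallyEq.2 hST]

theorem inner_nonpos_of_mem_posTangentConeAt (hv : v ∈ frechetNormalCone S x)
    (hy : y ∈ posTangentConeAt S x) : ⟪v, y⟫ ≤ 0 := by
  obtain ⟨_, l, _, c, d, hd₀, hdS, hcd⟩ := exists_fun_of_mem_tangentConeAt hy
  have hxd : Tendsto (fun k => x + d k) l (𝓝[S] x) :=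
    tendsto_nhdsWithin_iff.2 ⟨by simpa using hd₀.const_add x, hdS⟩
  have inner_le : ∀ ε > 0, ⟪v, y⟫ ≤ ε * ‖y‖ := by
    intro ε hε
    refine le_of_tendsto_of_tendsto (tendsto_const_nhds.inner hcd) (hcd.norm.const_mul ε) ?_
    filter_upwards [hxd.eventually (hv ε hε)] with k hk
    rw [add_sub_cancel_left] at hk
    calc ⟪v, c k • d k⟫ = c k * ⟪v, d k⟫ := real_inner_smul_right v (d k) (c k)
      _ ≤ c k * (ε * ‖d k‖) := by gcongr
      _ = ε * ‖c k • d k‖ := by rw [NNReal.smul_def, norm_smul, NNReal.norm_eq]; ring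
  have bound_tendsto : Tendsto (fun ε : ℝ => ε * ‖y‖) (𝓝[>] 0) (𝓝 0) :=
    ((continuous_mul_const ‖y‖).tendsto' 0 0 (zero_mul _)).mono_left nhdsWithin_le_nhds
  exact ge_of_tendsto bound_tendsto (eventually_mem_nhdsWithin.mono inner_le)

theorem mem_posTangentConeAt_of_hasDerivAt {F : Type*} [NormedAddCommGroup F] [NormedSpace ℝ F]
    {S : Set F} {γ : ℝ → F} {y : F} (hγ : HasDerivAt γ y 0) (hS : ∀ᶠ s in 𝓝[>] 0, γ s ∈ S) :
    y ∈ posTangentConeAt S (γ 0) := by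
  refine mem_tangentConeAt_of_seq (𝓝[>] (0 : ℝ)) (fun s => s⁻¹.toNNReal)
    (fun s => γ s - γ 0) ?_ (by simpa using hS) ?_
  · exact (tendsto_sub_nhds_zero_iff.2 hγ.continuousAt.tendsto).mono_left nhdsWithin_le_nhds
  · refine hγ.tendsto_slope_zero_right.congr' ?_
    filter_upwards [self_mem_nhdsWithin] with s (hs : 0 < s)
    rw [zero_add, NNReal.smul_def, Real.coe_toNNReal _ (inv_pos.2 hs).le]

theorem norm_cos_smul_add_sin_smul (hx : ‖x‖ = 1) (hy : ‖y‖ = 1) (hxy : ⟪x, y⟫ = 0) (s : ℝ) :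
    ‖Real.cos s • x + Real.sin s • y‖ = 1 := by
  rw [← sq_eq_sq₀ (norm_nonneg _) zero_le_one, norm_add_sq_real, norm_smul, norm_smul,
    real_inner_smul_left, real_inner_smul_right, hx, hy, hxy]
  simp

theorem mem_posTangentConeAt_inter_sphere (hxL : x ∈ L) (hx : ‖x‖ = 1) (hyL : y ∈ L)
    (hy : ‖y‖ = 1) (hxy : ⟪x, y⟫ = 0) :
    y ∈ posTangentConeAt ((L : Set E) ∩ Metric.sphere 0 1) x := by
  let γ : ℝ → E := fun s => Real.cos s • x + Real.sin s • y
  have hγ₀ : γ 0 = x := by simp [γ]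
  have hγ : HasDerivAt γ y 0 := by
    simpa using
      ((Real.hasDerivAt_cos 0).smul_const x).fun_add ((Real.hasDerivAt_sin 0).smul_const y)
  rw [← hγ₀]
  refine mem_posTangentConeAt_of_hasDerivAt hγ (Eventually.of_forall fun s => ⟨?_, ?_⟩)
  · exact L.add_mem (L.smul_mem _ hxL) (L.smul_mem _ hyL)
  · exact mem_sphere_zero_iff_norm.2 (norm_cos_smul_add_sin_smul hx hy hxy s)

theorem inner_eq_zero_of_mem_frechetNormalCone_inter_sphere (hxL : x ∈ L) (hx : ‖x‖ = 1)
    (hv : v ∈ frechetNormalCone ((L : Set E) ∩ Metric.sphere 0 1) x) (hyL : y ∈ L)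
    (hxy : ⟪x, y⟫ = 0) : ⟪v, y⟫ = 0 := by
  rcases eq_or_ne y 0 with rfl | hy
  · exact inner_zero_right v
  have inner_nonpos : ∀ u ∈ L, ‖u‖ = 1 → ⟪x, u⟫ = 0 → ⟪v, u⟫ ≤ 0 := fun u huL hu hxu =>
    inner_nonpos_of_mem_posTangentConeAt hv
      (mem_posTangentConeAt_inter_sphere hxL hx huL hu hxu)
  let u := ‖y‖⁻¹ • y
  have huL : u ∈ L := L.smul_mem _ hyL
  have hu : ‖u‖ = 1 := norm_smul_inv_norm hy
  have hxu : ⟪x, u⟫ = 0 := by rw [real_inner_smul_right, hxy, mul_zero]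
  have hvu : ⟪v, u⟫ = 0 := by
    refine le_antisymm (inner_nonpos u huL hu hxu) ?_
    simpa using inner_nonpos (-u) (L.neg_mem huL) (by rwa [norm_neg]) (by simpa using hxu)
  simpa [u, real_inner_smul_right, hy] using hvu

theorem sub_inner_smul_mem_orthogonal (hxL : x ∈ L) (hx : ‖x‖ = 1)
    (hv : v ∈ frechetNormalCone ((L : Set E) ∩ Metric.sphere 0 1) x) :
    v - ⟪v, x⟫ • x ∈ Lᗮ := by
  rw [Submodule.mem_orthogonal']
  intro y hyL
  have hvy : ⟪v, y - ⟪x, y⟫ • x⟫ = 0 := by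
    refine inner_eq_zero_of_mem_frechetNormalCone_inter_sphere hxL hx hv
      (L.sub_mem hyL (L.smul_mem _ hxL)) ?_
    rw [inner_sub_right, real_inner_smul_right, real_inner_self_eq_norm_sq, hx]
    ring
  rw [inner_sub_right, real_inner_smul_right] at hvy
  rw [inner_sub_left, real_inner_smul_left]
  linarith

theorem inner_sub_self_of_norm_eq {z : E} (h : ‖z‖ = ‖x‖) :
    ⟪x, z - x⟫ = -(‖z - x‖ ^ 2 / 2) := by
  rw [norm_sub_sq_real, inner_sub_right, real_inner_self_eq_norm_sq, h, real_inner_comm]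
  ring

theorem smul_mem_frechetNormalCone_sphere (t : ℝ) (x : E) :
    t • x ∈ frechetNormalCone (Metric.sphere 0 ‖x‖) x := by
  intro ε hε
  have small : ∀ᶠ z in 𝓝 x, -t / 2 * ‖z - x‖ < ε :=
    (Continuous.tendsto' (by fun_prop) _ 0 (by simp)).eventually_lt_const hε
  filter_upwards [small.filter_mono nhdsWithin_le_nhds, self_mem_nhdsWithin] with z hzε hz
  calc ⟪t • x, z - x⟫ = -t / 2 * ‖z - x‖ * ‖z - x‖ := by
        rw [real_inner_smul_left, inner_sub_self_of_norm_eq (mem_sphere_zero_iff_norm.1 hz)]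
        ring
    _ ≤ ε * ‖z - x‖ := by gcongr

theorem mem_frechetNormalCone_inter_sphere (hxL : x ∈ L) {t : ℝ} (hv : v - t • x ∈ Lᗮ) :
    v ∈ frechetNormalCone ((L : Set E) ∩ Metric.sphere 0 ‖x‖) x := by
  intro ε hε
  have ht := (smul_mem_frechetNormalCone_sphere t x ε hε).filter_mono
    (nhdsWithin_mono x (Set.inter_subset_right (s := L)))
  filter_upwards [ht, self_mem_nhdsWithin] with z hz hzS
  have hvz : ⟪v - t • x, z - x⟫ = 0 :=
    L.inner_left_of_mem_orthogonal (L.sub_mem hzS.1 hxL) hv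
  rw [inner_sub_left, sub_eq_zero] at hvz
  rwa [hvz]

end FrechetNormalCone

section Subdifferential

variable {n : ℕ} {S : Set (EuclideanSpace ℝ (Fin n))} {v x z : EuclideanSpace ℝ (Fin n)}

open Classical in
/-- The indicator function of a set in the sense of variational analysis: `0` on `S` and `+∞` off
`S`. `indC n r` is the instance `S = sphC n r`. -/
def extIndicator {α : Type*} (S : Set α) : α → EReal :=
  fun x => if x ∈ S then 0 else ⊤

theorem zero_le_liminf_iff_forall_pos {α : Type*} {l : Filter α} {f : α → EReal} :
    0 ≤ liminf f l ↔ ∀ ε : ℝ, 0 < ε → ∀ᶠ a in l, ((-ε : ℝ) : EReal) ≤ f a := by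
  rw [le_liminf_iff']
  constructor
  · intro h ε hε
    exact h _ (by exact_mod_cast neg_lt_zero.2 hε)
  · intro h c hc
    obtain ⟨e, hce, he⟩ := EReal.lt_iff_exists_real_btwn.1 hc
    have he' : e < 0 := by exact_mod_cast he
    filter_upwards [h (-e) (neg_pos.2 he')] with a ha
    rw [neg_neg] at ha
    exact hce.le.trans ha

theorem neg_le_extIndicator_quotient_iff (hx : x ∈ S) (hzx : z ≠ x) (ε : ℝ) :
    ((-ε : ℝ) : EReal) ≤ (extIndicator S z - extIndicator S x - ((⟪v, z - x⟫ : ℝ) : EReal)) /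
        ((‖z - x‖ : ℝ) : EReal) ↔ (z ∈ S → ⟪v, z - x⟫ ≤ ε * ‖z - x‖) := by
  have hpos : 0 < ‖z - x‖ := norm_sub_pos_iff.2 hzx
  by_cases hz : z ∈ S
  · simp only [extIndicator, hx, hz, if_true, sub_zero, zero_sub, forall_const]
    rw [← EReal.coe_neg, ← EReal.coe_div, EReal.coe_le_coe_iff, le_div_iff₀ hpos, neg_mul,
      neg_le_neg_iff]
  · simp only [extIndicator, hx, hz, if_true, if_false, sub_zero, EReal.top_sub_coe]
    rw [EReal.top_div_of_pos_ne_top (by exact_mod_cast hpos) (EReal.coe_ne_top _)]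
    simp

theorem mem_fsub_extIndicator_iff :
    v ∈ fsub (extIndicator S) x ↔ x ∈ S ∧ v ∈ frechetNormalCone S x := by
  have ne_top_iff : extIndicator S x ≠ ⊤ ↔ x ∈ S := by simp [extIndicator]
  simp only [fsub, Set.mem_ofPred_eq, ne_top_iff, zero_le_liminf_iff_forall_pos]
  refine and_congr_right fun hx => forall₂_congr fun ε _ => ?_
  rw [eventually_nhdsWithin_iff, eventually_nhdsWithin_iff]
  refine eventually_congr (Eventually.of_forall fun z => ?_)
  rcases eq_or_ne z x with rfl | hzx
  · simp
  · rw [neg_le_extIndicator_quotient_iff hx hzx]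
    simp [hzx]

theorem fsub_subset_lsub (φ : EuclideanSpace ℝ (Fin n) → EReal) (x : EuclideanSpace ℝ (Fin n)) :
    fsub φ x ⊆ lsub φ x := fun v hv =>
  ⟨fun _ => x, fun _ => v, tendsto_const_nhds, tendsto_const_nhds, fun _ => hv, tendsto_const_nhds⟩

theorem apply_eq_inner_mul_apply_of_mem_lsub {φ : EuclideanSpace ℝ (Fin n) → EReal} {i : Fin n}
    (hφ : ∀ᶠ y in 𝓝 x, ∀ w ∈ fsub φ y, w i = ⟪w, y⟫ * y i) (hv : v ∈ lsub φ x) :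
    v i = ⟪v, x⟫ * x i := by
  obtain ⟨u, w, hu, -, hwu, hw⟩ := hv
  have tendsto_coord {f : ℕ → EuclideanSpace ℝ (Fin n)} {a : EuclideanSpace ℝ (Fin n)}
      (hf : Tendsto f atTop (𝓝 a)) : Tendsto (fun k => f k i) atTop (𝓝 (a i)) :=
    ((EuclideanSpace.proj i).continuous.tendsto a).comp hf
  have coord_eq : ∀ᶠ k in atTop, w k i = ⟪w k, u k⟫ * u k i :=
    (hu.eventually hφ).mono fun k hk => hk _ (hwu k)
  exact tendsto_nhds_unique ((tendsto_coord hw).congr' coord_eq)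
    ((hw.inner hu).mul (tendsto_coord hu))

end Subdifferential

section CoordinateSubspace

variable {ι : Type*} {n : ℕ}

/-- The coordinate subspace of vectors supported in `I`, whose unit sphere is the local model of the
sparse sphere. -/
def coordSubspace (I : Finset ι) : Submodule ℝ (EuclideanSpace ℝ ι) where
  carrier := {y | ∀ i ∉ I, y i = 0}
  zero_mem' := fun _ _ => rfl
  add_mem' := fun hy hz i hi => by simp [hy i hi, hz i hi]
  smul_mem' := fun c y hy i hi => by simp [hy i hi]

theorem mem_orthogonal_coordSubspace_iff [Fintype ι] {I : Finset ι} {w : EuclideanSpace ℝ ι} :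
    w ∈ (coordSubspace I)ᗮ ↔ ∀ i ∈ I, w i = 0 := by
  classical
  constructor
  · intro hw i hi
    have single_mem : EuclideanSpace.single i (1 : ℝ) ∈ coordSubspace I := by
      intro j hj
      simp [ne_of_mem_of_not_mem hi hj |>.symm]
    simpa [EuclideanSpace.inner_single_right] using
      Submodule.inner_left_of_mem_orthogonal single_mem hw
  · intro hw
    rw [Submodule.mem_orthogonal']
    intro y hy
    rw [PiLp.inner_apply]
    refine Finset.sum_eq_zero fun i _ => ?_
    by_cases hi : i ∈ I
    · simp [hw i hi]
    · simp [hy i hi]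

theorem mem_suppF {x : EuclideanSpace ℝ (Fin n)} {i : Fin n} : i ∈ suppF x ↔ x i ≠ 0 := by
  simp [suppF]

theorem mem_coordSubspace_iff {I : Finset (Fin n)} {x : EuclideanSpace ℝ (Fin n)} :
    x ∈ coordSubspace I ↔ suppF x ⊆ I := by
  simp only [Finset.subset_iff, mem_suppF]
  exact forall_congr' fun i => not_imp_comm

theorem eventually_suppF_subset (x : EuclideanSpace ℝ (Fin n)) :
    ∀ᶠ z in 𝓝 x, suppF x ⊆ suppF z := by
  refine (eventually_all_finset (suppF x)).2 fun i hi => ?_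
  simp only [mem_suppF] at hi ⊢
  exact (EuclideanSpace.proj (𝕜 := ℝ) i).continuous.continuousAt.eventually_ne hi

end CoordinateSubspace

section SparseSphere

variable {n r : ℕ} {I : Finset (Fin n)} {v x : EuclideanSpace ℝ (Fin n)}

theorem mem_fsub_indC_iff :
    v ∈ fsub (indC n r) x ↔ x ∈ sphC n r ∧ v ∈ frechetNormalCone (sphC n r) x :=
  mem_fsub_extIndicator_iff

theorem sphC_subset_sphere : sphC n r ⊆ Metric.sphere 0 1 :=
  fun _ hz => mem_sphere_zero_iff_norm.2 hz.2

theorem coordSubspace_inter_sphere_subset_sphC (hI : I.card ≤ r) :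
    (coordSubspace I : Set (EuclideanSpace ℝ (Fin n))) ∩ Metric.sphere 0 1 ⊆ sphC n r :=
  fun _ hz => ⟨(Finset.card_le_card (mem_coordSubspace_iff.1 hz.1)).trans hI,
    mem_sphere_zero_iff_norm.1 hz.2⟩

theorem sphC_eventuallyEq_coordSubspace_inter_sphere (hcard : (suppF x).card = r) :
    sphC n r =ᶠ[𝓝 x]
      ((coordSubspace (suppF x) : Set (EuclideanSpace ℝ (Fin n))) ∩ Metric.sphere 0 1 :
        Set (EuclideanSpace ℝ (Fin n))) := by
  rw [eventuallyEq_set]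
  filter_upwards [eventually_suppF_subset x] with z hxz
  refine ⟨fun hz => ⟨?_, sphC_subset_sphere hz⟩,
    fun hz => coordSubspace_inter_sphere_subset_sphC hcard.le hz⟩
  have suppF_eq : suppF x = suppF z := Finset.eq_of_subset_of_card_le hxz (hz.1.trans hcard.ge)
  exact mem_coordSubspace_iff.2 suppF_eq.ge

theorem apply_eq_inner_mul_apply_of_mem_fsub {i : Fin n} (hi : (insert i (suppF x)).card ≤ r)
    (hv : v ∈ fsub (indC n r) x) : v i = ⟪v, x⟫ * x i := by
  obtain ⟨hx, hv⟩ := mem_fsub_indC_iff.1 hv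
  have hxL : x ∈ coordSubspace (insert i (suppF x)) :=
    mem_coordSubspace_iff.2 (Finset.subset_insert i (suppF x))
  have horth := sub_inner_smul_mem_orthogonal hxL hx.2
    (frechetNormalCone_anti (coordSubspace_inter_sphere_subset_sphC hi) hv)
  exact sub_eq_zero.1 (mem_orthogonal_coordSubspace_iff.1 horth i (Finset.mem_insert_self i _))

theorem apply_eq_inner_mul_apply_of_mem_fsub_of_mem_suppF {i : Fin n} (hi : i ∈ suppF x)
    (hv : v ∈ fsub (indC n r) x) : v i = ⟪v, x⟫ * x i := by
  refine apply_eq_inner_mul_apply_of_mem_fsub ?_ hv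
  rw [Finset.insert_eq_of_mem hi]
  exact (mem_fsub_indC_iff.1 hv).1.1

theorem smul_mem_fsub_indC (hx : x ∈ sphC n r) (t : ℝ) : t • x ∈ fsub (indC n r) x := by
  have normal := smul_mem_frechetNormalCone_sphere t x
  rw [hx.2] at normal
  exact mem_fsub_indC_iff.2 ⟨hx, frechetNormalCone_anti sphC_subset_sphere normal⟩

theorem fsub_indC_eq_of_card_insert_le (hx : x ∈ sphC n r)
    (hcard : ∀ i, (insert i (suppF x)).card ≤ r) :
    fsub (indC n r) x = {v | ∃ t : ℝ, v = t • x} := by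
  ext v
  constructor
  · intro hv
    exact ⟨⟪v, x⟫, PiLp.ext fun i => apply_eq_inner_mul_apply_of_mem_fsub (hcard i) hv⟩
  · rintro ⟨t, rfl⟩
    exact smul_mem_fsub_indC hx t

theorem fsub_indC_eq_of_card_eq (hx : x ∈ sphC n r) (hcard : (suppF x).card = r) :
    fsub (indC n r) x = {v | ∃ t : ℝ, ∀ i ∈ suppF x, v i = t * x i} := by
  ext v
  constructor
  · intro hv
    exact ⟨⟪v, x⟫, fun i hi => apply_eq_inner_mul_apply_of_mem_fsub_of_mem_suppF hi hv⟩
  · rintro ⟨t, ht⟩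
    have horth : v - t • x ∈ (coordSubspace (suppF x))ᗮ :=
      mem_orthogonal_coordSubspace_iff.2 fun i hi => sub_eq_zero.2 (ht i hi)
    have normal := mem_frechetNormalCone_inter_sphere (mem_coordSubspace_iff.2 subset_rfl) horth
    rw [hx.2, ← frechetNormalCone_congr (sphC_eventuallyEq_coordSubspace_inter_sphere hcard)]
      at normal
    exact mem_fsub_indC_iff.2 ⟨hx, normal⟩

theorem apply_eq_inner_mul_apply_of_mem_lsub_of_mem_suppF {i : Fin n} (hi : i ∈ suppF x)
    (hv : v ∈ lsub (indC n r) x) : v i = ⟪v, x⟫ * x i := by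
  refine apply_eq_inner_mul_apply_of_mem_lsub ?_ hv
  filter_upwards [eventually_suppF_subset x] with y hxy w hw
  exact apply_eq_inner_mul_apply_of_mem_fsub_of_mem_suppF (hxy hi) hw

theorem lsub_indC_self_eq (hx : x ∈ sphC n n) :
    lsub (indC n n) x = {v | ∃ t : ℝ, v = t • x} := by
  refine Set.Subset.antisymm (fun v hv => ⟨⟪v, x⟫, PiLp.ext fun i => ?_⟩) ?_
  · exact apply_eq_inner_mul_apply_of_mem_lsub (Eventually.of_forall fun y w hw =>
      apply_eq_inner_mul_apply_of_mem_fsub (card_finset_fin_le _) hw) hv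
  · rintro _ ⟨t, rfl⟩
    exact fsub_subset_lsub _ _ (smul_mem_fsub_indC hx t)

end SparseSphere

/-- Lemma 6.1: the Fréchet and limiting subdifferentials of the indicator of the
sparse unit sphere C. -/
theorem subdifferential_of_sparse_sphere_indicator
    {n : ℕ} (r : ℕ) (hr1 : 1 ≤ r) (hrn : r ≤ n)
    (x : EuclideanSpace ℝ (Fin n)) (hx : x ∈ sphC n r) :
    (((suppF x).card < r → fsub (indC n r) x = {v | ∃ t : ℝ, v = t • x}) ∧
      ((suppF x).card = r →
        fsub (indC n r) x = {v | ∃ t : ℝ, ∀ i ∈ suppF x, v i = t * x i})) ∧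
    (∀ v ∈ lsub (indC n r) x, ∃ t : ℝ, ∀ i ∈ suppF x, v i = t * x i) ∧
    (r = n →
      fsub (indC n r) x = {v | ∃ t : ℝ, v = t • x} ∧
      lsub (indC n r) x = {v | ∃ t : ℝ, v = t • x}) := by
  refine ⟨⟨fun hlt => ?_, fsub_indC_eq_of_card_eq hx⟩, fun v hv => ?_, ?_⟩
  · exact fsub_indC_eq_of_card_insert_le hx fun i => (Finset.card_insert_le i _).trans hlt
  · exact ⟨⟪v, x⟫, fun i hi => apply_eq_inner_mul_apply_of_mem_lsub_of_mem_suppF hi hv⟩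
  · rintro rfl
    exact ⟨fsub_indC_eq_of_card_insert_le hx fun i => card_finset_fin_le _, lsub_indC_self_eq hx⟩
end
end
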